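/- For all integers n ≥ 2 and 1 ≤ k ≤ n, s(n,k) = s(n-1,k-1) + Σ_{j=k+1}^{n-1} 2·3^{j-k-1} · s(n-1,j). -/

import Mathlib

/-!
Reading a path from an arbitrary starting height `h` turns every count into a first-step recursion.
Let `F h k` be the generating function, by number of `U` and `H` steps, of the paths from height
`h` down to `0` that have no `H` at height `0` and exactly `k` hills. Splitting off the first step,
`F (h+1) k = X * F (h+2) k + F h k + X * F (h+1) k`, and this recursion, which determines
`F h k` from `F 0 k`, is also satisfied by `R ^ h * F 0 k`, where `R = 1 + X R + X R²` is the large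
Schröder series (`pathSeries_eq`).

Put `S k = F 0 k` and `G = R - 1 = X R + X R²`. Splitting off the first two steps of a path that
has a hill gives `S (k+1) = X S k + X G S (k+1)` (`pathSeries_zero_succ`). The functional equation
of `R` reads `G (1 - X G) = X (2 + 3 G)`, hence `G S k = 2 S (k+1) + 3 G S (k+1)`
(`schroderTail_mul_pathSeries`). Iterating this identity expands the coefficients of `G S k` as the
sum in the theorem; the iteration stops because `X ^ k ∣ S k`.
-/

/-- A step of a Schröder path: up `(1,1)`, down `(1,-1)`, or horizontal `(2,0)`. -/
inductive SStep : Type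
  | U | D | H
  deriving DecidableEq

/-- `IsSchroeder n w` : `w` is a Schröder path of semilength `n`. -/
def IsSchroeder (n : ℕ) (w : List SStep) : Prop :=
  w.count SStep.U = w.count SStep.D ∧
  w.count SStep.U + w.count SStep.H = n ∧
  ∀ i : ℕ, (w.take i).count SStep.D ≤ (w.take i).count SStep.U

/-- The number of hills: occurrences of the factor `UD` starting at height `0`. -/
def hills (w : List SStep) : ℕ :=
  ((Finset.range w.length).filter (fun i =>
    w[i]? = some SStep.U ∧ w[i+1]? = some SStep.D ∧
    (w.take i).count SStep.U = (w.take i).count SStep.D)).card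

/-- The number of horizontal steps at height `0`. -/
def h0 (w : List SStep) : ℕ :=
  ((Finset.range w.length).filter (fun i =>
    w[i]? = some SStep.H ∧
    (w.take i).count SStep.U = (w.take i).count SStep.D)).card

/-- The number of horizontal steps at positive height. -/
def hpos (w : List SStep) : ℕ :=
  ((Finset.range w.length).filter (fun i =>
    w[i]? = some SStep.H ∧
    (w.take i).count SStep.D < (w.take i).count SStep.U)).card

/-- `r n k` : the number of Schröder paths of semilength `n` with exactly `k` hills. -/
noncomputable def r (n k : ℕ) : ℕ :=
  Nat.card {w : List SStep // IsSchroeder n w ∧ hills w = k}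

/-- A little Schröder path: a Schröder path with no horizontal step at height `0`. -/
def IsLittle (n : ℕ) (w : List SStep) : Prop :=
  IsSchroeder n w ∧ h0 w = 0

/-- `s n k` : the number of little Schröder paths of semilength `n` with exactly `k` hills. -/
noncomputable def s (n k : ℕ) : ℕ :=
  Nat.card {w : List SStep // IsLittle n w ∧ hills w = k}

open PowerSeries

/-- The number of hills of `w` read as a path that starts at height `h`. -/
def hillsFrom (h : ℕ) (w : List SStep) : ℕ :=
  ((Finset.range w.length).filter (fun i =>
    w[i]? = some SStep.U ∧ w[i+1]? = some SStep.D ∧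
    h + (w.take i).count SStep.U = (w.take i).count SStep.D)).card

/-- The paths from height `h` to height `0` with `n` steps `U` or `H` in total, never going below
height `0`, without `H` at height `0`, and with exactly `k` hills. -/
def pathsFrom (h n k : ℕ) : Set (List SStep) :=
  {w | h + w.count SStep.U = w.count SStep.D ∧
    w.count SStep.U + w.count SStep.H = n ∧
    (∀ i : ℕ, (w.take i).count SStep.D ≤ h + (w.take i).count SStep.U) ∧
    (∀ i : ℕ, w[i]? = some SStep.H →
      h + (w.take i).count SStep.U ≠ (w.take i).count SStep.D) ∧
    hillsFrom h w = k}

lemma s_eq_ncard (n k : ℕ) : s n k = (pathsFrom 0 n k).ncard := by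
  have hset : {w : List SStep | IsLittle n w ∧ hills w = k} = pathsFrom 0 n k := by
    ext w
    have hh : h0 w = 0 ↔ ∀ i : ℕ, w[i]? = some SStep.H →
        0 + (w.take i).count SStep.U ≠ (w.take i).count SStep.D := by
      simp only [h0, Finset.card_eq_zero, Finset.filter_eq_empty_iff, Finset.mem_range, not_and,
        zero_add]
      refine ⟨fun H i hi => H ?_ hi, fun H i _ hi => H i hi⟩
      exact (List.getElem?_eq_some_iff.1 hi).1
    simp only [pathsFrom, IsLittle, IsSchroeder, Set.mem_ofPred_eq, hh, hills, hillsFrom, zero_add]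
    tauto
  rw [← hset]
  rfl

lemma length_eq_count (w : List SStep) :
    w.length = w.count SStep.U + w.count SStep.D + w.count SStep.H := by
  induction w with
  | nil => rfl
  | cons a w ih => cases a <;> simp [ih] <;> omega

lemma pathsFrom_finite (h n k : ℕ) : (pathsFrom h n k).Finite := by
  have : Finite SStep :=
    Finite.of_surjective (fun i : Fin 3 => ![SStep.U, SStep.D, SStep.H] i)
      (by rintro (_ | _ | _); exacts [⟨0, rfl⟩, ⟨1, rfl⟩, ⟨2, rfl⟩])
  refine (List.finite_length_le SStep (2 * n + h)).subset fun w hw => ?_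
  obtain ⟨h1, h2, -⟩ := hw
  have := length_eq_count w
  simp only [Set.mem_ofPred_eq]
  omega

/-! ### First-step recursions -/

lemma hillsFrom_cons (h : ℕ) (a : SStep) (w : List SStep) :
    hillsFrom h (a :: w) = (if a = SStep.U ∧ w[0]? = some SStep.D ∧ h = 0 then 1 else 0) +
      ((Finset.range w.length).filter (fun i =>
        w[i]? = some SStep.U ∧ w[i+1]? = some SStep.D ∧
        h + (a :: w.take i).count SStep.U = (a :: w.take i).count SStep.D)).card := by
  simp only [hillsFrom, Finset.card_filter, List.length_cons, Finset.sum_range_succ']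
  rw [add_comm]
  simp [-Finset.sum_boole]
  congr!

lemma hillsFrom_U (h : ℕ) (w : List SStep) :
    hillsFrom h (SStep.U :: w) =
      (if w[0]? = some SStep.D ∧ h = 0 then 1 else 0) + hillsFrom (h + 1) w := by
  rw [hillsFrom_cons]
  simp [hillsFrom, add_comm, add_left_comm]

lemma hillsFrom_D (h : ℕ) (w : List SStep) :
    hillsFrom (h + 1) (SStep.D :: w) = hillsFrom h w := by
  rw [hillsFrom_cons]
  simp [hillsFrom, add_right_comm _ 1]

lemma hillsFrom_H (h : ℕ) (w : List SStep) :
    hillsFrom h (SStep.H :: w) = hillsFrom h w := by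
  rw [hillsFrom_cons]
  simp [hillsFrom]

lemma forall_nat_iff {p : ℕ → Prop} : (∀ i, p i) ↔ p 0 ∧ ∀ i, p (i + 1) :=
  ⟨fun H => ⟨H 0, fun i => H _⟩, fun H i => by cases i; exacts [H.1, H.2 _]⟩

lemma nil_mem_pathsFrom {h n k : ℕ} : [] ∈ pathsFrom h n k ↔ h = 0 ∧ n = 0 ∧ k = 0 := by
  simp [pathsFrom, hillsFrom, eq_comm]

lemma U_mem_pathsFrom_zero {h k : ℕ} {w : List SStep} :
    SStep.U :: w ∉ pathsFrom h 0 k := by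
  simp [pathsFrom]

lemma H_mem_pathsFrom_zero {h k : ℕ} {w : List SStep} :
    SStep.H :: w ∉ pathsFrom h 0 k := by
  simp [pathsFrom]

/-- A leading `U` raises the starting height; `c` is `1` if that `U` begins a hill and `0`
otherwise. -/
lemma U_mem_pathsFrom_iff {h n k c : ℕ} {w : List SStep}
    (hc : (if w[0]? = some SStep.D ∧ h = 0 then 1 else 0) = c) :
    SStep.U :: w ∈ pathsFrom h (n + 1) (c + k) ↔ w ∈ pathsFrom (h + 1) n k := by
  simp only [pathsFrom, Set.mem_ofPred_eq, hillsFrom_U, hc]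
  rw [forall_nat_iff (p := fun i => List.count SStep.D (List.take i (SStep.U :: w)) ≤ _),
    forall_nat_iff (p := fun i => (SStep.U :: w)[i]? = _ → _)]
  have e (x : ℕ) : h + 1 + x = h + (x + 1) := by omega
  refine and_congr (by simp [e]) (and_congr (by simp; omega) ?_)
  simp [e]

lemma U_mem_pathsFrom {h n k : ℕ} {w : List SStep} :
    SStep.U :: w ∈ pathsFrom (h + 1) (n + 1) k ↔ w ∈ pathsFrom (h + 2) n k := by
  simpa using U_mem_pathsFrom_iff (h := h + 1) (n := n) (k := k) (w := w) (c := 0) (by simp)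

lemma D_mem_pathsFrom {h n k : ℕ} {w : List SStep} :
    SStep.D :: w ∈ pathsFrom (h + 1) n k ↔ w ∈ pathsFrom h n k := by
  simp only [pathsFrom, Set.mem_ofPred_eq, hillsFrom_D]
  rw [forall_nat_iff (p := fun i => List.count SStep.D (List.take i (SStep.D :: w)) ≤ _),
    forall_nat_iff (p := fun i => (SStep.D :: w)[i]? = _ → _)]
  simp [add_right_comm _ 1]

lemma D_mem_pathsFrom_zero {n k : ℕ} {w : List SStep} :
    SStep.D :: w ∉ pathsFrom 0 n k := by
  intro h
  simpa using h.2.2.1 1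

lemma H_mem_pathsFrom {h n k : ℕ} {w : List SStep} :
    SStep.H :: w ∈ pathsFrom (h + 1) (n + 1) k ↔ w ∈ pathsFrom (h + 1) n k := by
  simp only [pathsFrom, Set.mem_ofPred_eq, hillsFrom_H]
  rw [forall_nat_iff (p := fun i => List.count SStep.D (List.take i (SStep.H :: w)) ≤ _),
    forall_nat_iff (p := fun i => (SStep.H :: w)[i]? = _ → _)]
  simp [← add_assoc]

lemma H_mem_pathsFrom_height_zero {n k : ℕ} {w : List SStep} :
    SStep.H :: w ∉ pathsFrom 0 n k := by
  intro h
  simpa using h.2.2.2.1 0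

lemma UD_mem_pathsFrom {n k : ℕ} {w : List SStep} :
    SStep.U :: SStep.D :: w ∈ pathsFrom 0 (n + 1) (k + 1) ↔ w ∈ pathsFrom 0 n k := by
  rw [add_comm k, U_mem_pathsFrom_iff (by simp), D_mem_pathsFrom]

lemma U_mem_pathsFrom_height_zero {n k : ℕ} {w : List SStep} (hw : w[0]? ≠ some SStep.D) :
    SStep.U :: w ∈ pathsFrom 0 (n + 1) k ↔ w ∈ pathsFrom 1 n k := by
  simpa using U_mem_pathsFrom_iff (h := 0) (n := n) (k := k) (w := w) (c := 0) (by simp [hw])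

/-- The number of paths counted by `pathsFrom`. -/
noncomputable def pathCount (h n k : ℕ) : ℕ := (pathsFrom h n k).ncard

lemma pathCount_succ_zero (h k : ℕ) : pathCount (h + 1) 0 k = pathCount h 0 k := by
  have hset : pathsFrom (h + 1) 0 k = List.cons SStep.D '' pathsFrom h 0 k := by
    ext w
    rcases w with _ | ⟨_ | _ | _, w⟩ <;>
      simp [nil_mem_pathsFrom, U_mem_pathsFrom_zero, H_mem_pathsFrom_zero, D_mem_pathsFrom]
  rw [pathCount, hset, Set.ncard_image_of_injective _ List.cons_injective, pathCount]

lemma ncard_three_images {f g e : List SStep → List SStep} (hf : f.Injective) (hg : g.Injective)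
    (he : e.Injective) (hfg : ∀ v w, f v ≠ g w) (hfe : ∀ v w, f v ≠ e w) (hge : ∀ v w, g v ≠ e w)
    {A B C : Set (List SStep)} (hA : A.Finite) (hB : B.Finite) (hC : C.Finite) :
    (f '' A ∪ (g '' B ∪ e '' C)).ncard = A.ncard + B.ncard + C.ncard := by
  rw [Set.ncard_union_eq _ (hA.image _) ((hB.image _).union (hC.image _)),
    Set.ncard_union_eq _ (hB.image _) (hC.image _), Set.ncard_image_of_injective _ hf,
    Set.ncard_image_of_injective _ hg, Set.ncard_image_of_injective _ he, add_assoc]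
  · rw [Set.disjoint_left]
    rintro _ ⟨v, -, rfl⟩ ⟨w, -, h⟩
    exact hge v w h.symm
  · rw [Set.disjoint_left]
    rintro _ ⟨v, -, rfl⟩ (⟨w, -, h⟩ | ⟨w, -, h⟩)
    exacts [hfg v w h.symm, hfe v w h.symm]

lemma pathCount_succ_succ (h n k : ℕ) :
    pathCount (h + 1) (n + 1) k =
      pathCount (h + 2) n k + pathCount h (n + 1) k + pathCount (h + 1) n k := by
  have hset : pathsFrom (h + 1) (n + 1) k = List.cons SStep.U '' pathsFrom (h + 2) n k ∪
      (List.cons SStep.D '' pathsFrom h (n + 1) k ∪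
        List.cons SStep.H '' pathsFrom (h + 1) n k) := by
    ext w
    rcases w with _ | ⟨_ | _ | _, w⟩ <;>
      simp [nil_mem_pathsFrom, U_mem_pathsFrom, H_mem_pathsFrom, D_mem_pathsFrom]
  rw [pathCount, hset, ncard_three_images List.cons_injective List.cons_injective
    List.cons_injective (by simp) (by simp) (by simp) (pathsFrom_finite _ _ _)
    (pathsFrom_finite _ _ _) (pathsFrom_finite _ _ _)]
  rfl

lemma pathCount_zero_zero (k : ℕ) : pathCount 0 0 (k + 1) = 0 := by
  have hset : pathsFrom 0 0 (k + 1) = ∅ := by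
    ext w
    rcases w with _ | ⟨_ | _ | _, w⟩ <;>
      simp [nil_mem_pathsFrom, U_mem_pathsFrom_zero, H_mem_pathsFrom_zero, D_mem_pathsFrom_zero]
  rw [pathCount, hset, Set.ncard_empty]

lemma cons_cons_injective (a b : SStep) :
    Function.Injective (fun w : List SStep => a :: b :: w) :=
  fun v w h => by simpa using h

lemma pathCount_zero_one (k : ℕ) : pathCount 0 1 (k + 1) = pathCount 0 0 k := by
  have hset : pathsFrom 0 1 (k + 1) =
      (fun w => SStep.U :: SStep.D :: w) '' pathsFrom 0 0 k := by
    ext w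
    rcases w with _ | ⟨_ | _ | _, _ | ⟨_ | _ | _, w⟩⟩ <;>
      simp [nil_mem_pathsFrom, U_mem_pathsFrom_zero, H_mem_pathsFrom_zero, D_mem_pathsFrom_zero,
        H_mem_pathsFrom_height_zero, UD_mem_pathsFrom (n := 0),
        U_mem_pathsFrom_height_zero (n := 0)]
  rw [pathCount, hset, Set.ncard_image_of_injective _ (cons_cons_injective _ _), pathCount]

lemma pathCount_zero_add_two (n k : ℕ) :
    pathCount 0 (n + 2) (k + 1) =
      pathCount 2 n (k + 1) + pathCount 0 (n + 1) k + pathCount 1 n (k + 1) := by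
  have hset : pathsFrom 0 (n + 2) (k + 1) =
      (fun w => SStep.U :: SStep.U :: w) '' pathsFrom 2 n (k + 1) ∪
      ((fun w => SStep.U :: SStep.D :: w) '' pathsFrom 0 (n + 1) k ∪
        (fun w => SStep.U :: SStep.H :: w) '' pathsFrom 1 n (k + 1)) := by
    ext w
    rcases w with _ | ⟨_ | _ | _, _ | ⟨_ | _ | _, w⟩⟩ <;>
      simp [nil_mem_pathsFrom, D_mem_pathsFrom_zero,
        H_mem_pathsFrom_height_zero, UD_mem_pathsFrom (n := n + 1),
        U_mem_pathsFrom_height_zero (n := n + 1), U_mem_pathsFrom (h := 0),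
        H_mem_pathsFrom (h := 0)]
  rw [pathCount, hset, ncard_three_images (cons_cons_injective _ _) (cons_cons_injective _ _)
    (cons_cons_injective _ _) (by simp) (by simp) (by simp) (pathsFrom_finite _ _ _)
    (pathsFrom_finite _ _ _) (pathsFrom_finite _ _ _)]
  rfl

/-! ### Generating functions -/

/-- The large Schröder series with integer coefficients. -/
noncomputable def schroderSeries : ℤ⟦X⟧ :=
  PowerSeries.map (Nat.castRingHom ℤ) largeSchroderSeries

lemma schroderSeries_eq :
    schroderSeries = 1 + X * schroderSeries + X * schroderSeries ^ 2 := by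
  have h := congrArg (PowerSeries.map (Nat.castRingHom ℤ))
    largeSchroderSeries_eq_one_add_X_mul_largeSchroderSeries_add_X_mul_largeSchroderSeries_sq
  simpa [schroderSeries] using h

/-- The generating function of `pathCount h n k` in `n`. -/
noncomputable def pathSeries (h k : ℕ) : ℤ⟦X⟧ := PowerSeries.mk fun n => (pathCount h n k : ℤ)

lemma pathSeries_succ (h k : ℕ) :
    pathSeries (h + 1) k = X * pathSeries (h + 2) k + pathSeries h k + X * pathSeries (h + 1) k := by
  ext n
  cases n with
  | zero => simp [pathSeries, pathCount_succ_zero]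
  | succ n => simp [pathSeries, pathCount_succ_succ, coeff_succ_X_mul]

lemma pathSeries_eq (h k : ℕ) : pathSeries h k = schroderSeries ^ h * pathSeries 0 k := by
  have hR (h : ℕ) : schroderSeries ^ (h + 1) * pathSeries 0 k =
      X * (schroderSeries ^ (h + 2) * pathSeries 0 k) + schroderSeries ^ h * pathSeries 0 k +
        X * (schroderSeries ^ (h + 1) * pathSeries 0 k) := by
    linear_combination schroderSeries ^ h * pathSeries 0 k * schroderSeries_eq
  -- The recursion reaches the coefficient `n` at height `h + 1` from lower coefficients at any
  -- height and the coefficient `n` at height `h`: induction on `n`, then on `h`.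
  ext n
  induction n generalizing h with
  | zero =>
    induction h with
    | zero => simp
    | succ h ih =>
      rw [pathSeries_succ, hR h]
      simp only [map_add, coeff_zero_X_mul, ih]
  | succ n ihn =>
    induction h with
    | zero => simp
    | succ h ih =>
      rw [pathSeries_succ, hR h]
      simp only [map_add, coeff_succ_X_mul, ih, ihn]

/-- The series `R - 1` of nonempty Schröder paths. -/
noncomputable def schroderTail : ℤ⟦X⟧ := schroderSeries - 1

lemma pathSeries_zero_succ (k : ℕ) :
    pathSeries 0 (k + 1) =
      X * pathSeries 0 k + X * (schroderTail * pathSeries 0 (k + 1)) := by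
  have h : pathSeries 0 (k + 1) = X * (X * pathSeries 2 (k + 1)) + X * pathSeries 0 k +
      X * (X * pathSeries 1 (k + 1)) := by
    ext n
    rcases n with _ | _ | n
    · simp [pathSeries, pathCount_zero_zero]
    · simp [pathSeries, pathCount_zero_one, coeff_succ_X_mul]
    · simp [pathSeries, pathCount_zero_add_two, coeff_succ_X_mul]
  rw [pathSeries_eq 2, pathSeries_eq 1] at h
  rw [schroderTail]
  linear_combination h - X * pathSeries 0 (k + 1) * schroderSeries_eq

lemma isUnit_one_sub : IsUnit (1 - X * schroderTail) := by
  rw [isUnit_iff_constantCoeff]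
  simp

lemma schroderTail_mul_pathSeries (k : ℕ) :
    schroderTail * pathSeries 0 k =
      2 * pathSeries 0 (k + 1) + 3 * (schroderTail * pathSeries 0 (k + 1)) := by
  apply isUnit_one_sub.mul_left_cancel
  have h := pathSeries_zero_succ k
  have hG : schroderTail * (1 - X * schroderTail) = X * (2 + 3 * schroderTail) := by
    rw [schroderTail]
    linear_combination schroderSeries_eq
  linear_combination pathSeries 0 k * hG - (2 + 3 * schroderTail) * h

lemma X_pow_dvd_pathSeries (k : ℕ) : X ^ k ∣ pathSeries 0 k := by
  induction k with
  | zero => simp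
  | succ k ih =>
    rw [← isUnit_one_sub.dvd_mul_left]
    have h : (1 - X * schroderTail) * pathSeries 0 (k + 1) = X * pathSeries 0 k := by
      linear_combination pathSeries_zero_succ k
    rw [h, pow_succ']
    exact mul_dvd_mul_left _ ih

lemma X_dvd_schroderTail : X ∣ schroderTail := by
  refine ⟨schroderSeries + schroderSeries ^ 2, ?_⟩
  rw [schroderTail]
  linear_combination schroderSeries_eq

lemma coeff_schroderTail_mul_of_le {m k : ℕ} (h : m ≤ k) :
    coeff m (schroderTail * pathSeries 0 k) = 0 := by
  have hd : X ^ (k + 1) ∣ schroderTail * pathSeries 0 k := by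
    rw [pow_succ']
    exact mul_dvd_mul X_dvd_schroderTail (X_pow_dvd_pathSeries k)
  exact X_pow_dvd_iff.1 hd m (by omega)

/-- `schroderTail_mul_pathSeries` iterated `d` times; the remainder has no coefficient of degree
`m` because `m ≤ k + d`. -/
lemma coeff_schroderTail_mul (d : ℕ) : ∀ m k : ℕ, m ≤ k + d →
    coeff m (schroderTail * pathSeries 0 k) =
      ∑ i ∈ Finset.range d, 2 * 3 ^ i * coeff m (pathSeries 0 (k + 1 + i)) := by
  induction d with
  | zero => intro m k h; simpa using coeff_schroderTail_mul_of_le h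
  | succ d ih =>
    intro m k h
    have h2 (φ : ℤ⟦X⟧) : coeff m (2 * φ) = 2 * coeff m φ := by
      rw [two_mul, map_add, two_mul]
    have h3 (φ : ℤ⟦X⟧) : coeff m (3 * φ) = 3 * coeff m φ := by
      rw [show 3 * φ = φ + φ + φ by ring, map_add, map_add]; ring
    rw [schroderTail_mul_pathSeries, map_add, h2, h3, ih m (k + 1) (by omega),
      Finset.sum_range_succ', Finset.mul_sum, add_comm]
    congr 1
    · refine Finset.sum_congr rfl fun i _ => ?_
      rw [show k + 1 + 1 + i = k + 1 + (i + 1) by ring]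
      ring

/-- For all integers `n ≥ 2` and `1 ≤ k ≤ n`,
`s(n,k) = s(n-1,k-1) + Σ_{j=k+1}^{n-1} 2⬝3^{j-k-1} ⬝ s(n-1,j)`. -/
theorem stmt3 (n k : ℕ) (hn : 2 ≤ n) (hk : 1 ≤ k) (hkn : k ≤ n) :
    s n k = s (n - 1) (k - 1) +
      ∑ j ∈ Finset.Ico (k + 1) n, 2 * 3 ^ (j - k - 1) * s (n - 1) j := by
  obtain ⟨m, rfl⟩ : ∃ m, n = m + 1 := ⟨n - 1, by omega⟩
  obtain ⟨l, rfl⟩ : ∃ l, k = l + 1 := ⟨k - 1, by omega⟩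
  have hs (a b : ℕ) : (s a b : ℤ) = coeff a (pathSeries 0 b) := by
    simp [pathSeries, pathCount, s_eq_ncard]
  zify
  simp only [hs, Nat.add_sub_cancel]
  rw [pathSeries_zero_succ, map_add, coeff_succ_X_mul, coeff_succ_X_mul,
    coeff_schroderTail_mul (m + 1 - (l + 1 + 1)) m (l + 1) (by omega),
    Finset.sum_Ico_eq_sum_range]
  congr 1
  refine Finset.sum_congr rfl fun i _ => ?_
  rw [show l + 1 + 1 + i - (l + 1) - 1 = i by omega]
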